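/- Let X be a metric space and H any hypothesis class on X. With respect to metric-ball attacks and the true-label loss ℓ_TL: (a) there exists a robustly-reliable learner L such that for every target h* ∈ H, every labeled sample S labeled by h*, and every η ≥ 0, RR^L(S,η) ⊇ Agree(H_0(S)); and (b) for every robustly-reliable learner L, every labeled sample S, and every η ≥ 0, RR^L(S,η) ⊆ Agree(H_0(S)). -/

import Mathlib

/-- `S` is labeled by `h` : every labeled pair in `S` carries the label `h` assigns. -/
def labeledBy {X : Type*} (S : List (X × Bool)) (h : X → Bool) : Prop :=
  ∀ p ∈ S, p.2 = h p.1

/-- Version space: hypotheses in `H` consistent with the sample `S`. -/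
def versionSpace {X : Type*} (H : Set (X → Bool)) (S : List (X × Bool)) : Set (X → Bool) :=
  {h ∈ H | ∀ p ∈ S, h p.1 = p.2}

/-- Agreement region of a set of hypotheses. -/
def agree {X : Type*} (G : Set (X → Bool)) : Set X :=
  {x | ∀ h₁ ∈ G, ∀ h₂ ∈ G, h₁ x = h₂ x}

/-- True-label loss `ℓ_TL^{h*}(h,x,z)`. -/
def lossTL {X : Type*} (hs h : X → Bool) (x z : X) : ℕ :=
  if h z ≠ hs z then 1 else 0

/-- A learner (`hyp`, `rad`) is robustly reliable w.r.t. metric-ball attacks and loss `ℓ`: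
the reliability radius takes values in `{-1} ∪ [0,∞]`, and for every target `hs ∈ H` and every
sample labeled by `hs`, (i) if `rad S z > 0` and `dist x z < rad S z` then `ℓ hs (hyp S) x z = 0`,
and (ii) if `rad S z = 0` then `hyp S z = hs z`. -/
def RobustlyReliableBall {X : Type*} [MetricSpace X] (H : Set (X → Bool))
    (ℓ : (X → Bool) → (X → Bool) → X → X → ℕ)
    (hyp : List (X × Bool) → X → Bool) (rad : List (X × Bool) → X → EReal) : Prop :=
  (∀ S z, rad S z = -1 ∨ 0 ≤ rad S z) ∧
  ∀ hs ∈ H, ∀ S : List (X × Bool), labeledBy S hs →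
    (∀ x z : X, 0 < rad S z → ((dist x z : ℝ) : EReal) < rad S z → ℓ hs (hyp S) x z = 0) ∧
    (∀ z : X, rad S z = 0 → hyp S z = hs z)

/-- The robustly-reliable region at level `η` is `{z | rad S z ≥ η}`. -/
def RRregion {X : Type*} (rad : List (X × Bool) → X → EReal)
    (S : List (X × Bool)) (η : ℝ) : Set X :=
  {z | (η : EReal) ≤ rad S z}

/-!
The true-label loss ignores the unperturbed point `x`, so a nonnegative reliability radius at `z`
says only that the prediction at `z` is the target's label there. Since every hypothesis of the
version space may be the target, this is possible exactly when they all agree at `z`; there, any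
consistent hypothesis may claim infinite radius.
-/

section Learning

variable {X : Type*} {H : Set (X → Bool)} {S : List (X × Bool)} {h : X → Bool} {z : X}

lemma mem_versionSpace_iff : h ∈ versionSpace H S ↔ h ∈ H ∧ labeledBy S h :=
  and_congr_right' (forall₂_congr fun _ _ => eq_comm)

lemma lossTL_eq_zero_iff {hs : X → Bool} {x : X} : lossTL hs h x z = 0 ↔ h z = hs z := by
  simp [lossTL]

/-- The prediction rule that follows some hypothesis of the version space; it is arbitrary when
the version space is empty. -/
noncomputable def consistentHypothesis (H : Set (X → Bool)) (S : List (X × Bool)) : X → Bool :=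
  Classical.epsilon (· ∈ versionSpace H S)

open Classical in
/-- The reliability radius of the learner that is certain exactly on the agreement region of the
version space: `⊤` there, and the abstention value `-1` elsewhere. -/
noncomputable def agreementRadius (H : Set (X → Bool)) (S : List (X × Bool)) (z : X) : EReal :=
  if z ∈ agree (versionSpace H S) then ⊤ else -1

lemma consistentHypothesis_mem (hh : h ∈ versionSpace H S) :
    consistentHypothesis H S ∈ versionSpace H S :=
  Classical.epsilon_spec (p := (· ∈ versionSpace H S)) ⟨h, hh⟩

lemma agreementRadius_of_mem (hz : z ∈ agree (versionSpace H S)) : agreementRadius H S z = ⊤ :=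
  if_pos hz

lemma agreementRadius_of_notMem (hz : z ∉ agree (versionSpace H S)) :
    agreementRadius H S z = -1 :=
  if_neg hz

lemma mem_agree_of_agreementRadius_nonneg (hz : 0 ≤ agreementRadius H S z) :
    z ∈ agree (versionSpace H S) := by
  by_contra hz'
  rw [agreementRadius_of_notMem hz'] at hz
  exact absurd hz (by simp)

lemma agree_subset_RRregion_agreementRadius (H : Set (X → Bool)) (S : List (X × Bool)) (η : ℝ) :
    agree (versionSpace H S) ⊆ RRregion (agreementRadius H) S η := fun _ hz =>
  le_top.trans_eq (agreementRadius_of_mem hz).symm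

end Learning

section MetricBall

variable {X : Type*} [MetricSpace X] {H : Set (X → Bool)}
  {hyp : List (X × Bool) → X → Bool} {rad : List (X × Bool) → X → EReal}

lemma robustlyReliableBall_lossTL_of_forall_eq (hrad : ∀ S z, rad S z = -1 ∨ 0 ≤ rad S z)
    (hyp_eq : ∀ S z, 0 ≤ rad S z → ∀ h ∈ versionSpace H S, hyp S z = h z) :
    RobustlyReliableBall H lossTL hyp rad := by
  refine ⟨hrad, fun hs hsH S hS => ?_⟩
  have hs_mem : hs ∈ versionSpace H S := mem_versionSpace_iff.2 ⟨hsH, hS⟩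
  exact ⟨fun _ z hpos _ => lossTL_eq_zero_iff.2 (hyp_eq S z hpos.le hs hs_mem),
    fun z hzero => hyp_eq S z hzero.ge hs hs_mem⟩

lemma robustlyReliableBall_consistentHypothesis (H : Set (X → Bool)) :
    RobustlyReliableBall H lossTL (consistentHypothesis H) (agreementRadius H) := by
  refine robustlyReliableBall_lossTL_of_forall_eq (fun S z => ?_) fun S z hz h hh => ?_
  · by_cases hz : z ∈ agree (versionSpace H S)
    · exact .inr (le_top.trans_eq (agreementRadius_of_mem hz).symm)
    · exact .inl (agreementRadius_of_notMem hz)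
  · exact mem_agree_of_agreementRadius_nonneg hz _ (consistentHypothesis_mem hh) h hh

namespace RobustlyReliableBall

variable {ℓ : (X → Bool) → (X → Bool) → X → X → ℕ}

lemma hyp_eq_of_nonneg (hL : RobustlyReliableBall H ℓ hyp rad)
    (hℓ : ∀ hs h z, ℓ hs h z z = 0 → h z = hs z) {S : List (X × Bool)} {z : X}
    (hz : 0 ≤ rad S z) {h : X → Bool} (hh : h ∈ versionSpace H S) : hyp S z = h z := by
  obtain ⟨hH, hS⟩ := mem_versionSpace_iff.1 hh
  obtain ⟨loss_eq_zero, eq_of_rad_eq_zero⟩ := hL.2 h hH S hS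
  rcases hz.eq_or_lt with hzero | hpos
  · exact eq_of_rad_eq_zero z hzero.symm
  · -- The trivial attack `x = z` is always within the ball.
    exact hℓ h (hyp S) z (loss_eq_zero z z hpos (by simpa using hpos))

theorem RRregion_subset_agree (hL : RobustlyReliableBall H ℓ hyp rad)
    (hℓ : ∀ hs h z, ℓ hs h z z = 0 → h z = hs z) (S : List (X × Bool)) {η : ℝ} (hη : 0 ≤ η) :
    RRregion rad S η ⊆ agree (versionSpace H S) := by
  intro z hz h₁ hh₁ h₂ hh₂
  have rad_nonneg : 0 ≤ rad S z := (EReal.coe_nonneg.2 hη).trans hz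
  calc h₁ z = hyp S z := (hL.hyp_eq_of_nonneg hℓ rad_nonneg hh₁).symm
    _ = h₂ z := hL.hyp_eq_of_nonneg hℓ rad_nonneg hh₂

end RobustlyReliableBall

end MetricBall

/-- Theorem 3.1 (for `ℓ_TL`): (a) there is a robustly-reliable learner whose robustly-reliable
region contains the agreement region of the version space, at every level `η ≥ 0`, for every
target `h* ∈ H` and every sample labeled by it; (b) for every robustly-reliable learner, every
sample and every `η ≥ 0`, the robustly-reliable region is contained in the agreement region
of the version space. -/
theorem rr_region_eq_agreement_TL {X : Type*} [MetricSpace X] (H : Set (X → Bool)) :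
    (∃ (hyp : List (X × Bool) → X → Bool) (rad : List (X × Bool) → X → EReal),
      RobustlyReliableBall H lossTL hyp rad ∧
      ∀ hs ∈ H, ∀ S : List (X × Bool), labeledBy S hs → ∀ η : ℝ, 0 ≤ η →
        agree (versionSpace H S) ⊆ RRregion rad S η) ∧
    (∀ (hyp : List (X × Bool) → X → Bool) (rad : List (X × Bool) → X → EReal),
      RobustlyReliableBall H lossTL hyp rad →
      ∀ (S : List (X × Bool)) (η : ℝ), 0 ≤ η →
        RRregion rad S η ⊆ agree (versionSpace H S)) :=
  ⟨⟨consistentHypothesis H, agreementRadius H, robustlyReliableBall_consistentHypothesis H,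
      fun _ _ S _ η _ => agree_subset_RRregion_agreementRadius H S η⟩,
    fun _ _ hL S _ hη => hL.RRregion_subset_agree (fun _ _ _ => lossTL_eq_zero_iff.1) S hη⟩
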